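/- Let q be a prime power, n ≥ 2, 1 ≤ k < n with gcd(k, n−k) = 1. Let K = F_{q^n}(z) be the rational function field and Ω an algebraic closure of K. Define f(T) = −z^{−1} · Tr_{n−k}(T) + Tr_k(T)^{q^{n−k}} and g(T) = Tr_{n−k}(T)^{q^k} − z · Tr_k(T) in K[T]. Then the intermediate field of Ω/K generated over K by all roots of f equals the intermediate field generated over K by all roots of g; i.e., the splitting fields of f and g over K coincide. -/

import Mathlib

/-- The trace polynomial `Tr_i(x) = x + x^q + ⋯ + x^{q^{i-1}}`. -/
def Tr {R : Type*} [CommRing R] (q i : ℕ) (x : R) : R :=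
  ∑ j ∈ Finset.range i, x ^ q ^ j

/-!
Write `a = n - k` and `b = k`. For any `t` and `y` in characteristic `p`, the element
`B(t, y) = ∑_{j < b} y^{q^j} Tr_{j+1}(Tr_a t) + ∑_{j < a} Tr_b(t)^{q^j} Tr_j(y)^{q^b}`
satisfies, by telescoping,
`B(t, y)^q - B(t, y) = Tr_b(t)^{q^a} Tr_a(y)^{q^b} - Tr_a(t) Tr_b(y)`,
and the right side vanishes when `f(t) = 0` and `g(y) = 0`. So `B` is an `F_q`-valued pairing
between the roots of `f` and those of `g`. As a polynomial in `y`, `B(t, y)` has degree smaller than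
the number of roots of `g` and derivative `Tr_a(t)`; hence a root `t` of `f` orthogonal to all roots
of `g` has `Tr_a(t) = Tr_b(t) = 0`, which forces `t = 0` as `a` and `b` are coprime. An automorphism
`σ` fixing the roots of `g` preserves the pairing, so `σ t - t` is orthogonal to all of them and `σ`
fixes `t`. Exchanging `(a, b, z)` with `(b, a, z⁻¹)` gives the other inclusion.
-/

open Polynomial

section CommRing

variable {R S : Type*} [CommRing R] [CommRing S]

lemma Tr_zero_left (q : ℕ) (x : R) : Tr q 0 x = 0 := Finset.sum_range_zero _

lemma Tr_one_left (q : ℕ) (x : R) : Tr q 1 x = x := by simp [Tr]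

lemma Tr_succ (q i : ℕ) (x : R) : Tr q (i + 1) x = Tr q i x + x ^ q ^ i :=
  Finset.sum_range_succ _ _

lemma map_Tr {F : Type*} [FunLike F R S] [RingHomClass F R S] (φ : F) (q i : ℕ) (x : R) :
    φ (Tr q i x) = Tr q i (φ x) := by
  simp only [Tr, map_sum, map_pow]

lemma pow_pow_eq_of_pow_eq {q : ℕ} {c : R} (hc : c ^ q = c) (j : ℕ) : c ^ q ^ j = c := by
  have hfix : Function.IsFixedPt (fun x : R ↦ x ^ q) c := hc
  simpa only [pow_iterate] using (hfix.iterate j).eq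

lemma Tr_mul_of_pow_eq {q : ℕ} {c : R} (hc : c ^ q = c) (i : ℕ) (x : R) :
    Tr q i (c * x) = c * Tr q i x := by
  simp only [Tr, mul_pow, pow_pow_eq_of_pow_eq hc, Finset.mul_sum]

/-- The pairing `B(t, y)` between roots `t` of `tracePoly q b a z⁻¹` and roots `y` of
`tracePoly q a b z`. It is built from traces only, so that any ring homomorphism is compatible
with it and `z` does not occur. -/
def tracePairing (q a b : ℕ) (t y : R) : R :=
  ∑ j ∈ Finset.range b, y ^ q ^ j * Tr q (j + 1) (Tr q a t) +
    ∑ j ∈ Finset.range a, Tr q b t ^ q ^ j * Tr q j y ^ q ^ b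

lemma map_tracePairing {F : Type*} [FunLike F R S] [RingHomClass F R S] (φ : F)
    (q a b : ℕ) (t y : R) :
    φ (tracePairing q a b t y) = tracePairing q a b (φ t) (φ y) := by
  simp only [tracePairing, map_add, map_sum, map_mul, map_pow, map_Tr]

lemma tracePairing_zero_right {q : ℕ} (hq : q ≠ 0) (a b : ℕ) (t : R) :
    tracePairing q a b t 0 = 0 := by
  simp [tracePairing, Tr, hq]

/-- The polynomial `Tr_a(T)^{q^b} - z Tr_b(T)`. In the theorem, `g` is `tracePoly q (n - k) k z` and
`f` is `tracePoly q k (n - k) z⁻¹`. -/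
noncomputable def tracePoly (q a b : ℕ) (z : R) : R[X] :=
  Tr q a X ^ q ^ b - C z * Tr q b X

lemma aeval_tracePoly [Algebra R S] (q a b : ℕ) (z : R) (y : S) :
    aeval y (tracePoly q a b z) = Tr q a y ^ q ^ b - algebraMap R S z * Tr q b y := by
  have aeval_Tr (i : ℕ) : aeval y (Tr q i (X : R[X])) = Tr q i y := by
    simpa only [aeval_X] using map_Tr (aeval (R := R) y) q i X
  simp only [tracePoly, map_sub, map_mul, map_pow, aeval_C, aeval_Tr]

lemma map_tracePoly (φ : R →+* S) (q a b : ℕ) (z : R) :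
    (tracePoly q a b z).map φ = tracePoly q a b (φ z) := by
  have map_Tr_X (i : ℕ) : (Tr q i (X : R[X])).map φ = Tr q i X := by
    simpa only [coe_mapRingHom, map_X] using map_Tr (mapRingHom φ) q i X
  simp only [tracePoly, Polynomial.map_sub, Polynomial.map_mul, Polynomial.map_pow, map_C, map_Tr_X]

section Degree

variable {q : ℕ}

lemma natDegree_Tr_succ_X [Nontrivial R] (hq : 1 < q) (i : ℕ) :
    (Tr q (i + 1) (X : R[X])).natDegree = q ^ i := by
  induction i with
  | zero => simp only [zero_add, Tr_one_left, natDegree_X, pow_zero]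
  | succ i ih =>
    have hlt : (Tr q (i + 1) (X : R[X])).natDegree < (X ^ q ^ (i + 1) : R[X]).natDegree := by
      rw [ih, natDegree_X_pow]
      exact Nat.pow_lt_pow_succ hq
    rw [Tr_succ, natDegree_add_eq_right_of_natDegree_lt hlt, natDegree_X_pow]

lemma natDegree_Tr_X_lt [Nontrivial R] (hq : 1 < q) (i : ℕ) :
    (Tr q i (X : R[X])).natDegree < q ^ i := by
  cases i with
  | zero => simp only [Tr_zero_left, natDegree_zero, pow_zero, zero_lt_one]
  | succ i => exact natDegree_Tr_succ_X (R := R) hq i ▸ Nat.pow_lt_pow_succ hq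

lemma natDegree_tracePoly [IsDomain R] (hq : 1 < q) (a b : ℕ) (z : R) :
    (tracePoly q (a + 1) b z).natDegree = q ^ (a + b) := by
  have hdeg : (Tr q (a + 1) (X : R[X]) ^ q ^ b).natDegree = q ^ (a + b) := by
    rw [natDegree_pow, natDegree_Tr_succ_X hq, ← pow_add, add_comm]
  have hlt : (C z * Tr q b X).natDegree < (Tr q (a + 1) (X : R[X]) ^ q ^ b).natDegree :=
    calc (C z * Tr q b X).natDegree ≤ (Tr q b (X : R[X])).natDegree := natDegree_C_mul_le _ _
      _ < q ^ b := natDegree_Tr_X_lt hq b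
      _ ≤ q ^ (a + b) := Nat.pow_le_pow_right hq.le (Nat.le_add_left b a)
      _ = _ := hdeg.symm
  rw [tracePoly, natDegree_sub_eq_left_of_natDegree_lt hlt, hdeg]

lemma natDegree_tracePairing_C_X_lt [Nontrivial R] (hq : 1 < q) (a b : ℕ) (t : R) :
    (tracePairing q (a + 1) b (C t) X).natDegree < q ^ (a + b) := by
  have hpos : 0 < q ^ (a + b) := pow_pos (zero_lt_one.trans hq) _
  have natDegree_sum_lt (m : ℕ) (P : ℕ → R[X]) (hP : ∀ j < m, (P j).natDegree < q ^ (a + b)) :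
      (∑ j ∈ Finset.range m, P j).natDegree < q ^ (a + b) :=
    Nat.lt_of_le_pred hpos <| natDegree_sum_le_of_forall_le _ _ fun j hj ↦
      Nat.le_pred_of_lt (hP j (Finset.mem_range.1 hj))
  refine (natDegree_add_le _ _).trans_lt (max_lt (natDegree_sum_lt _ _ fun j hj ↦ ?_)
    (natDegree_sum_lt _ _ fun j hj ↦ ?_))
  · rw [← map_Tr C, ← map_Tr C]
    calc _ ≤ (X ^ q ^ j : R[X]).natDegree := natDegree_mul_C_le _ _
      _ = q ^ j := natDegree_X_pow _
      _ < q ^ (a + b) := Nat.pow_lt_pow_right hq (by omega)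
  · rw [← map_Tr C, ← C_pow]
    calc _ ≤ (Tr q j (X : R[X]) ^ q ^ b).natDegree := natDegree_C_mul_le _ _
      _ ≤ q ^ b * (Tr q j (X : R[X])).natDegree := natDegree_pow_le
      _ < q ^ b * q ^ j := by gcongr; exact natDegree_Tr_X_lt hq j
      _ ≤ q ^ (a + b) := by
        rw [← pow_add]
        exact Nat.pow_le_pow_right hq.le (by omega)

end Degree

section Derivative

variable {q : ℕ}

lemma derivative_pow_pow_of_natCast_eq_zero (hq : (q : R) = 0) {j : ℕ} (hj : j ≠ 0) (P : R[X]) :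
    derivative (P ^ q ^ j) = 0 := by
  rw [derivative_pow, Nat.cast_pow, hq, zero_pow hj, C_0, zero_mul, zero_mul]

lemma derivative_Tr_succ_X (hq : (q : R) = 0) (i : ℕ) :
    derivative (Tr q (i + 1) (X : R[X])) = 1 := by
  rw [Tr, Finset.sum_range_succ', derivative_add, derivative_sum,
    Finset.sum_eq_zero fun j _ ↦ derivative_pow_pow_of_natCast_eq_zero hq j.succ_ne_zero X]
  simp

lemma derivative_tracePoly (hq : (q : R) = 0) (a b : ℕ) (z : R) :
    derivative (tracePoly q a (b + 1) z) = C (-z) := by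
  rw [tracePoly, derivative_sub, derivative_pow_pow_of_natCast_eq_zero hq b.succ_ne_zero,
    derivative_C_mul, derivative_Tr_succ_X hq, zero_sub, mul_one, C_neg]

lemma derivative_tracePairing_C_X (hq : (q : R) = 0) (a b : ℕ) (t : R) :
    derivative (tracePairing q a (b + 1) (C t) X) = C (Tr q a t) := by
  have hleft (j : ℕ) :
      derivative (X ^ q ^ (j + 1) * Tr q (j + 1 + 1) (Tr q a (C t)) : R[X]) = 0 := by
    rw [← map_Tr C, ← map_Tr C, derivative_mul, derivative_C, mul_zero, add_zero,
      derivative_pow_pow_of_natCast_eq_zero hq j.succ_ne_zero, zero_mul]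
  have hright (j : ℕ) :
      derivative (Tr q (b + 1) (C t) ^ q ^ j * Tr q j X ^ q ^ (b + 1) : R[X]) = 0 := by
    rw [← map_Tr C, ← C_pow, derivative_C_mul,
      derivative_pow_pow_of_natCast_eq_zero hq b.succ_ne_zero, mul_zero]
  have hlinear : derivative (X ^ q ^ 0 * Tr q (0 + 1) (Tr q a (C t)) : R[X]) = C (Tr q a t) := by
    rw [pow_zero, pow_one, zero_add, Tr_one_left, ← map_Tr C, mul_comm, derivative_C_mul,
      derivative_X, mul_one]
  rw [tracePairing, Finset.sum_range_succ', derivative_add, derivative_add, hlinear,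
    derivative_sum, derivative_sum, Finset.sum_eq_zero fun j _ ↦ hleft j,
    Finset.sum_eq_zero fun j _ ↦ hright j, zero_add, add_zero]

end Derivative

section Frobenius

variable (p e : ℕ) [ExpChar R p]

lemma Tr_sub (i : ℕ) (x y : R) : Tr (p ^ e) i (x - y) = Tr (p ^ e) i x - Tr (p ^ e) i y := by
  simp only [Tr, ← pow_mul, sub_pow_expChar_pow, Finset.sum_sub_distrib]

lemma Tr_pow (i j : ℕ) (x : R) :
    Tr (p ^ e) i (x ^ (p ^ e) ^ j) = Tr (p ^ e) i x ^ (p ^ e) ^ j := by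
  simpa only [iterateFrobenius_def, pow_mul] using
    (map_Tr (iterateFrobenius R p (e * j)) (p ^ e) i x).symm

lemma Tr_add_left (i j : ℕ) (x : R) :
    Tr (p ^ e) (i + j) x = Tr (p ^ e) i x + Tr (p ^ e) j x ^ (p ^ e) ^ i := by
  rw [← Tr_pow]
  simp only [Tr, Finset.sum_range_add, ← pow_mul, ← pow_add, mul_add]

lemma Tr_succ' (i : ℕ) (x : R) : Tr (p ^ e) (i + 1) x = x + Tr (p ^ e) i x ^ p ^ e := by
  rw [add_comm i, Tr_add_left, Tr_one_left, pow_one]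

lemma Tr_succ_pow (i : ℕ) (x : R) :
    Tr (p ^ e) (i + 1) x ^ p ^ e = Tr (p ^ e) i x ^ p ^ e + x ^ (p ^ e) ^ (i + 1) := by
  rw [Tr_succ, add_pow_expChar_pow, ← pow_mul, ← pow_succ]

lemma Tr_comm (i j : ℕ) (x : R) :
    Tr (p ^ e) i (Tr (p ^ e) j x) = Tr (p ^ e) j (Tr (p ^ e) i x) :=
  calc
    _ = ∑ l ∈ Finset.range i, Tr (p ^ e) j (x ^ (p ^ e) ^ l) := by simp only [Tr_pow]; rfl
    _ = ∑ m ∈ Finset.range j, Tr (p ^ e) i (x ^ (p ^ e) ^ m) :=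
      Finset.sum_comm.trans <| Finset.sum_congr rfl fun m _ ↦ Finset.sum_congr rfl fun l _ ↦
        pow_right_comm _ _ _
    _ = _ := by simp only [Tr_pow]; rfl

lemma sum_pow_mul_Tr_succ_pow_sub_self (m : ℕ) (x y : R) :
    (∑ j ∈ Finset.range m, y ^ (p ^ e) ^ j * Tr (p ^ e) (j + 1) x) ^ p ^ e -
        ∑ j ∈ Finset.range m, y ^ (p ^ e) ^ j * Tr (p ^ e) (j + 1) x =
      y ^ (p ^ e) ^ m * Tr (p ^ e) m x ^ p ^ e - x * Tr (p ^ e) m y := by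
  induction m with
  | zero => simp [Tr_zero_left, (expChar_pos R p).ne']
  | succ m ih =>
    rw [Finset.sum_range_succ, add_pow_expChar_pow, mul_pow, ← pow_mul, ← pow_succ,
      Tr_succ _ m y]
    linear_combination ih - y ^ (p ^ e) ^ m * Tr_succ' p e m x

lemma sum_pow_mul_Tr_pow_sub_self (m : ℕ) (u w : R) :
    (∑ j ∈ Finset.range m, u ^ (p ^ e) ^ j * Tr (p ^ e) j w) ^ p ^ e -
        ∑ j ∈ Finset.range m, u ^ (p ^ e) ^ j * Tr (p ^ e) j w =
      u ^ (p ^ e) ^ m * Tr (p ^ e) m w - w * Tr (p ^ e) m u ^ p ^ e := by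
  induction m with
  | zero => simp [Tr_zero_left, (expChar_pos R p).ne']
  | succ m ih =>
    rw [Finset.sum_range_succ, add_pow_expChar_pow, mul_pow, ← pow_mul, ← pow_succ,
      Tr_succ_pow]
    linear_combination ih - u ^ (p ^ e) ^ (m + 1) * Tr_succ' p e m w

theorem tracePairing_pow_sub_self (a b : ℕ) (t y : R) :
    tracePairing (p ^ e) a b t y ^ p ^ e - tracePairing (p ^ e) a b t y =
      Tr (p ^ e) b t ^ (p ^ e) ^ a * Tr (p ^ e) a y ^ (p ^ e) ^ b -
        Tr (p ^ e) a t * Tr (p ^ e) b y := by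
  have hleft := sum_pow_mul_Tr_succ_pow_sub_self p e b (Tr (p ^ e) a t) y
  have hright := sum_pow_mul_Tr_pow_sub_self p e a (Tr (p ^ e) b t) (y ^ (p ^ e) ^ b)
  simp only [Tr_pow, Tr_comm p e a b] at hright
  rw [tracePairing, add_pow_expChar_pow]
  linear_combination hleft + hright

lemma tracePairing_sub_left (a b : ℕ) (t t' y : R) :
    tracePairing (p ^ e) a b (t - t') y =
      tracePairing (p ^ e) a b t y - tracePairing (p ^ e) a b t' y := by
  simp only [tracePairing, Tr_sub, ← pow_mul, sub_pow_expChar_pow, mul_sub, sub_mul,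
    Finset.sum_sub_distrib]
  ring

lemma Tr_mul_left_eq_zero {m : ℕ} {x : R} (hm : Tr (p ^ e) m x = 0) (l : ℕ) :
    Tr (p ^ e) (m * l) x = 0 := by
  induction l with
  | zero => exact Tr_zero_left _ _
  | succ l ih =>
    rw [Nat.mul_succ, Tr_add_left, ih, hm, zero_add,
      zero_pow (pow_ne_zero _ (pow_ne_zero _ (expChar_ne_zero R p)))]

lemma Tr_gcd_eq_zero [IsReduced R] {m n : ℕ} {x : R} (hm : Tr (p ^ e) m x = 0)
    (hn : Tr (p ^ e) n x = 0) : Tr (p ^ e) (m.gcd n) x = 0 := by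
  induction m, n using Nat.gcd.induction with
  | H0 n => rwa [Nat.gcd_zero_left]
  | H1 m n _ ih =>
    rw [Nat.gcd_rec]
    rw [← Nat.div_add_mod n m, Tr_add_left, Tr_mul_left_eq_zero p e hm, zero_add] at hn
    exact ih (eq_zero_of_pow_eq_zero hn) hm

lemma eq_zero_of_Tr_eq_zero_of_coprime [IsReduced R] {m n : ℕ} (hmn : m.Coprime n) {x : R}
    (hm : Tr (p ^ e) m x = 0) (hn : Tr (p ^ e) n x = 0) : x = 0 := by
  simpa only [hmn.gcd_eq_one, Tr_one_left] using Tr_gcd_eq_zero p e hm hn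

end Frobenius

end CommRing

section Field

variable {K E : Type*} [Field K] [Field E]

lemma separable_tracePoly {q : ℕ} (hq : (q : K) = 0) {a b : ℕ} (hb : 0 < b) {z : K} (hz : z ≠ 0) :
    (tracePoly q a b z).Separable := by
  obtain ⟨b, rfl⟩ := Nat.exists_eq_add_one.2 hb
  rw [separable_def, derivative_tracePoly hq]
  exact isCoprime_one_right.of_isCoprime_of_dvd_right (isUnit_C.2 (neg_ne_zero.2 hz).isUnit).dvd

lemma mem_rootSet_tracePoly [Algebra K E] {q : ℕ} (hq : (q : K) = 0) {a b : ℕ} (hb : 0 < b) {z : K}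
    (hz : z ≠ 0) {y : E} :
    y ∈ (tracePoly q a b z).rootSet E ↔
      Tr q a y ^ q ^ b = algebraMap K E z * Tr q b y := by
  rw [mem_rootSet_of_ne (separable_tracePoly hq hb hz).ne_zero, aeval_tracePoly, sub_eq_zero]

theorem Tr_eq_zero_of_forall_tracePairing_eq_zero {q : ℕ} (hq : 1 < q) (hq0 : (q : E) = 0)
    {a b : ℕ} (ha : 0 < a) (hb : 0 < b) {z : E} (hz : z ≠ 0) (hsplits : (tracePoly q a b z).Splits)
    {t : E}
    (ht : ∀ y : E, Tr q a y ^ q ^ b = z * Tr q b y → tracePairing q a b t y = 0) :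
    Tr q a t = 0 := by
  classical
  obtain ⟨a, rfl⟩ := Nat.exists_eq_add_one.2 ha
  set G := tracePoly q (a + 1) b z
  have hcard : G.roots.toFinset.card = q ^ (a + b) := by
    rw [Multiset.toFinset_card_of_nodup (nodup_roots (separable_tracePoly hq0 hb hz)),
      ← hsplits.natDegree_eq_card_roots, natDegree_tracePoly hq]
  have hzero : tracePairing q (a + 1) b (C t) X = 0 := by
    refine eq_zero_of_natDegree_lt_card_of_eval_eq_zero' _ G.roots.toFinset (fun y hy ↦ ?_)
      (hcard ▸ natDegree_tracePairing_C_X_lt hq a b t)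
    rw [← coe_evalRingHom, map_tracePairing, coe_evalRingHom, eval_C, eval_X]
    exact ht y ((mem_rootSet_tracePoly hq0 hb hz).1 (by simpa [rootSet_def] using hy))
  obtain ⟨b, rfl⟩ := Nat.exists_eq_add_one.2 hb
  rw [← C_eq_zero, ← derivative_tracePairing_C_X hq0, hzero, derivative_zero]

/-- The value `c` of the pairing satisfies `c ^ q = c`; it is fixed by `σ` because multiplication by
such a `c` preserves the roots of `tracePoly q a b z`, which `σ` fixes. -/
lemma tracePairing_map_left {p e : ℕ} [ExpChar E p] {a b : ℕ} {z : E}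
    {F : Type*} [FunLike F E E] [RingHomClass F E E] {σ : F}
    (hσ : ∀ y : E, Tr (p ^ e) a y ^ (p ^ e) ^ b = z * Tr (p ^ e) b y → σ y = y) {t y : E}
    (ht : Tr (p ^ e) a t = z * Tr (p ^ e) b t ^ (p ^ e) ^ a)
    (hy : Tr (p ^ e) a y ^ (p ^ e) ^ b = z * Tr (p ^ e) b y) :
    tracePairing (p ^ e) a b (σ t) y = tracePairing (p ^ e) a b t y := by
  obtain rfl | hy0 := eq_or_ne y 0
  · simp only [tracePairing_zero_right (pow_ne_zero _ (expChar_ne_zero E p))]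
  set c := tracePairing (p ^ e) a b t y with hc
  have hcq : c ^ p ^ e = c := by
    rw [← sub_eq_zero, hc, tracePairing_pow_sub_self, ht, hy]
    ring
  have hcy : Tr (p ^ e) a (c * y) ^ (p ^ e) ^ b = z * Tr (p ^ e) b (c * y) := by
    rw [Tr_mul_of_pow_eq hcq, Tr_mul_of_pow_eq hcq, mul_pow, pow_pow_eq_of_pow_eq hcq, hy]
    ring
  have hσc : σ c = c := by
    refine mul_right_cancel₀ hy0 ?_
    rw [← hσ (c * y) hcy, map_mul, hσ y hy]
  rw [← hσc, hc, map_tracePairing, hσ y hy]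

lemma mem_bot_of_isSeparable_of_forall_algEquiv_apply_eq [Algebra K E] [Normal K E] {x : E}
    (hx : IsSeparable K x) (hfix : ∀ σ : E ≃ₐ[K] E, σ x = x) : x ∈ (⊥ : Subalgebra K E) := by
  by_contra hmem
  obtain ⟨y, hne, hconj⟩ :=
    (notMem_iff_exists_ne_and_isConjRoot hx (Normal.splits inferInstance x)).1 hmem
  obtain ⟨σ, hσ⟩ := hconj.symm.exists_algEquiv
  exact hne ((hfix σ).symm.trans hσ)

theorem map_eq_self_of_forall_root_map_eq_self {p e : ℕ} [Fact p.Prime] [CharP E p] (he : e ≠ 0)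
    {a b : ℕ} (ha : 0 < a) (hb : 0 < b) (hab : a.Coprime b) {z : E} (hz : z ≠ 0)
    (hsplits : (tracePoly (p ^ e) a b z).Splits)
    {F : Type*} [FunLike F E E] [RingHomClass F E E] {σ : F} (hσz : σ z = z)
    (hσ : ∀ y : E, Tr (p ^ e) a y ^ (p ^ e) ^ b = z * Tr (p ^ e) b y → σ y = y) {t : E}
    (ht : Tr (p ^ e) a t = z * Tr (p ^ e) b t ^ (p ^ e) ^ a) : σ t = t := by
  have hq : 1 < p ^ e := Nat.one_lt_pow he (Fact.out : p.Prime).one_lt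
  have hq0 : ((p ^ e : ℕ) : E) = 0 := by rw [Nat.cast_pow, CharP.cast_eq_zero, zero_pow he]
  have hσt : Tr (p ^ e) a (σ t) = z * Tr (p ^ e) b (σ t) ^ (p ^ e) ^ a := by
    rw [← map_Tr, ht, map_mul, hσz, map_pow, map_Tr]
  have hTra : Tr (p ^ e) a (σ t - t) = 0 :=
    Tr_eq_zero_of_forall_tracePairing_eq_zero hq hq0 ha hb hz hsplits fun y hy ↦ by
      rw [tracePairing_sub_left, tracePairing_map_left hσ ht hy, sub_self]
  have hTrb : Tr (p ^ e) b (σ t - t) = 0 := by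
    have hzTrb : z * Tr (p ^ e) b (σ t - t) ^ (p ^ e) ^ a = Tr (p ^ e) a (σ t - t) := by
      rw [Tr_sub, Tr_sub, ← pow_mul, sub_pow_expChar_pow, mul_sub, pow_mul, hσt, ht]
    exact eq_zero_of_pow_eq_zero ((mul_eq_zero.1 (hzTrb.trans hTra)).resolve_left hz)
  exact sub_eq_zero.1 (eq_zero_of_Tr_eq_zero_of_coprime p e hab hTra hTrb)

theorem adjoin_rootSet_tracePoly_le [Algebra K E] [Normal K E] {p e : ℕ} [Fact p.Prime] [CharP K p]
    (he : e ≠ 0) {a b : ℕ} (ha : 0 < a) (hb : 0 < b) (hab : a.Coprime b) {z : K} (hz : z ≠ 0)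
    (hsplits : ((tracePoly (p ^ e) a b z).map (algebraMap K E)).Splits) :
    IntermediateField.adjoin K ((tracePoly (p ^ e) b a z⁻¹).rootSet E) ≤
      IntermediateField.adjoin K ((tracePoly (p ^ e) a b z).rootSet E) := by
  have : CharP E p := charP_of_injective_algebraMap' K p
  have hq0 : ((p ^ e : ℕ) : K) = 0 := by rw [Nat.cast_pow, CharP.cast_eq_zero, zero_pow he]
  have hzE : algebraMap K E z ≠ 0 := (_root_.map_ne_zero _).2 hz
  rw [map_tracePoly] at hsplits
  set L := IntermediateField.adjoin K ((tracePoly (p ^ e) a b z).rootSet E)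
  refine IntermediateField.adjoin_le_iff.2 fun t ht ↦ ?_
  have hsep : IsSeparable L t := IsSeparable.tower_top L <|
    (separable_tracePoly hq0 ha (inv_ne_zero hz)).of_dvd
      (minpoly.dvd K t (aeval_eq_zero_of_mem_rootSet ht))
  have htrace : Tr (p ^ e) a t = algebraMap K E z * Tr (p ^ e) b t ^ (p ^ e) ^ a := by
    rw [(mem_rootSet_tracePoly hq0 ha (inv_ne_zero hz)).1 ht, map_inv₀, mul_inv_cancel_left₀ hzE]
  have hfix (σ : E ≃ₐ[L] E) : σ t = t :=
    map_eq_self_of_forall_root_map_eq_self he ha hb hab hzE hsplits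
      (σ.commutes (algebraMap K L z))
      (fun y hy ↦ σ.commutes ⟨y, IntermediateField.subset_adjoin K _
        ((mem_rootSet_tracePoly hq0 hb hz).2 hy)⟩) htrace
  obtain ⟨l, rfl⟩ := mem_bot_of_isSeparable_of_forall_algEquiv_apply_eq hsep hfix
  exact l.2

end Field

theorem stmt_11_general {p e : ℕ} [Fact p.Prime] (he : e ≠ 0) {a b : ℕ} (ha : 0 < a) (hb : 0 < b)
    (hab : a.Coprime b) {K : Type*} [Field K] [CharP K p]
    (Ω : Type*) [Field Ω] [Algebra K Ω] [IsAlgClosure K Ω] {z : K} (hz : z ≠ 0) :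
    IntermediateField.adjoin K
        {t : Ω | -(algebraMap K Ω z)⁻¹ * Tr (p ^ e) a t + Tr (p ^ e) b t ^ (p ^ e) ^ a = 0} =
      IntermediateField.adjoin K
        {t : Ω | Tr (p ^ e) a t ^ (p ^ e) ^ b - algebraMap K Ω z * Tr (p ^ e) b t = 0} := by
  have hq0 : ((p ^ e : ℕ) : K) = 0 := by rw [Nat.cast_pow, CharP.cast_eq_zero, zero_pow he]
  have := IsAlgClosure.isAlgClosed K (K := Ω)
  have hf : {t : Ω | -(algebraMap K Ω z)⁻¹ * Tr (p ^ e) a t + Tr (p ^ e) b t ^ (p ^ e) ^ a = 0} =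
      (tracePoly (p ^ e) b a z⁻¹).rootSet Ω := by
    ext t
    rw [mem_rootSet_tracePoly hq0 ha (inv_ne_zero hz), map_inv₀, Set.mem_ofPred_eq, neg_mul,
      neg_add_eq_zero, eq_comm]
  have hg : {t : Ω | Tr (p ^ e) a t ^ (p ^ e) ^ b - algebraMap K Ω z * Tr (p ^ e) b t = 0} =
      (tracePoly (p ^ e) a b z).rootSet Ω := by
    ext t
    rw [mem_rootSet_tracePoly hq0 hb hz, Set.mem_ofPred_eq, sub_eq_zero]
  rw [hf, hg]
  refine (adjoin_rootSet_tracePoly_le he ha hb hab hz (IsAlgClosed.splits _)).antisymm ?_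
  simpa only [inv_inv] using adjoin_rootSet_tracePoly_le (E := Ω) he hb ha hab.symm
    (inv_ne_zero hz) (IsAlgClosed.splits _)

/-- Over `K = F_{q^n}(z)` with algebraic closure `Ω`, the intermediate field
of `Ω/K` generated by all roots of `f(T) = −z^{−1}·Tr_{n−k}(T) + Tr_k(T)^{q^{n−k}}` equals
the one generated by all roots of `g(T) = Tr_{n−k}(T)^{q^k} − z·Tr_k(T)`; i.e. the
splitting fields of `f` and `g` over `K` coincide. -/
theorem stmt_11 (p e q n k : ℕ) (hp : p.Prime) (he : 0 < e) (hq : q = p ^ e)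
    (hn : 2 ≤ n) (hk1 : 1 ≤ k) (hkn : k < n) (hgcd : Nat.gcd k (n - k) = 1)
    (F : Type*) [Field F] [Fintype F] (hF : Fintype.card F = q ^ n)
    (Ω : Type*) [Field Ω] [Algebra (RatFunc F) Ω] [IsAlgClosure (RatFunc F) Ω]
    (z : Ω) (hz : z = algebraMap (RatFunc F) Ω RatFunc.X) :
    IntermediateField.adjoin (RatFunc F)
        {t : Ω | -z⁻¹ * Tr q (n - k) t + (Tr q k t) ^ q ^ (n - k) = 0}
      = IntermediateField.adjoin (RatFunc F)
        {t : Ω | (Tr q (n - k) t) ^ q ^ k - z * Tr q k t = 0} := by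
  subst hq hz
  have := Fact.mk hp
  have := charP_of_card_eq_prime_pow (hF.trans (pow_mul p e n).symm)
  have := charP_of_injective_algebraMap (algebraMap F (RatFunc F)).injective p
  exact stmt_11_general he.ne' (Nat.sub_pos_of_lt hkn) hk1 (Nat.Coprime.symm hgcd) Ω
    RatFunc.X_ne_zero
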